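/- arXiv:2601.10125 — 10 statements merged into one kernel-verified Lean document; each statement's English description precedes it below -/
import Mathlib

section
/- Let V be a 2-dimensional real inner product space and let A : V × V × V → ℝ be a nonzero symmetric trilinear form. Then there exist an orthonormal basis (e₁, e₂) of V and real numbers λ, μ with λ > 0 and λ ≥ 2μ such that A(e₁,e₁,e₁) = λ, A(e₁,e₁,e₂) = 0, and A(e₁,e₂,e₂) = μ. Moreover, if λ = 2μ then A(e₂,e₂,e₂) = 0. -/
/-!
On the compact unit sphere of `V`, the continuous function `v ↦ A v v v` attains a maximum `lam`,
at some `e₁`; let `e₂` complete `e₁` to an orthonormal basis. If `lam ≤ 0`, the odd cubic form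
`v ↦ A v v v` vanishes identically, hence so does `A` by polarization; so `lam > 0`.

The remaining claims say that `θ ↦ A v v v`, `v = cos θ e₁ + sin θ e₂`, is maximal at `θ = 0`:
the first derivative gives `A e₁ e₁ e₂ = 0`, the second one `2 mu ≤ lam`, and when the second
derivative vanishes the third one must vanish too, which gives `A e₂ e₂ e₂ = 0`. In
`cubic_max_conditions` the circle is parametrized rationally, so that maximality becomes a
polynomial inequality in one variable `t`, and the derivatives are read off by dividing by
powers of `t` and letting `t → 0`.
-/

open RealInnerProductSpace

theorem nonneg_at_zero {p : ℝ → ℝ} (hp : Continuous p) (h : ∀ t, 0 < t → 0 ≤ p t) : 0 ≤ p 0 :=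
  ge_of_tendsto (hp.continuousAt.tendsto.mono_left (nhdsWithin_le_nhds (s := Set.Ioi 0)))
    (eventually_nhdsWithin_of_forall fun t ht => h t ht)

theorem eq_zero_at_zero {p : ℝ → ℝ} (hp : Continuous p) (h : ∀ t, 0 ≤ t * p t) : p 0 = 0 := by
  apply le_antisymm
  · have := nonneg_at_zero (p := fun t => -p (-t)) (by fun_prop) fun t ht => by
      have h1 := h (-t)
      exact nonneg_of_mul_nonneg_right (by linarith : 0 ≤ t * -p (-t)) ht
    simpa using this
  · exact nonneg_at_zero hp fun t ht => nonneg_of_mul_nonneg_right (h t) ht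

/-- First, second and third order conditions for the binary cubic
`l c³ + 3 b c² s + 3 m c s² + n s³` to attain its maximum on the unit circle at `(1, 0)`. -/
theorem cubic_max_conditions {l b m n : ℝ}
    (h : ∀ c s : ℝ, c ^ 2 + s ^ 2 = 1 →
      l * c ^ 3 + 3 * b * c ^ 2 * s + 3 * m * c * s ^ 2 + n * s ^ 3 ≤ l) :
    b = 0 ∧ 2 * m ≤ l ∧ (l = 2 * m → n = 0) := by
  -- The point `((1 - t²) / (1 + t²), 2t / (1 + t²))`, with denominators cleared.
  have key : ∀ t : ℝ, 0 ≤ t * (t * (2 * l * (3 + t ^ 4) - 12 * m * (1 - t ^ 2) - 8 * n * t)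
      - 6 * b * (1 - t ^ 2) ^ 2) := by
    intro t
    have ht : 0 < 1 + t ^ 2 := by positivity
    have h1 := h ((1 - t ^ 2) / (1 + t ^ 2)) (2 * t / (1 + t ^ 2)) (by field_simp; ring)
    have h2 := mul_le_mul_of_nonneg_right h1 (pow_pos ht 3).le
    have h3 : (l * ((1 - t ^ 2) / (1 + t ^ 2)) ^ 3
        + 3 * b * ((1 - t ^ 2) / (1 + t ^ 2)) ^ 2 * (2 * t / (1 + t ^ 2))
        + 3 * m * ((1 - t ^ 2) / (1 + t ^ 2)) * (2 * t / (1 + t ^ 2)) ^ 2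
        + n * (2 * t / (1 + t ^ 2)) ^ 3) * (1 + t ^ 2) ^ 3
        = l * (1 - t ^ 2) ^ 3 + 3 * b * (1 - t ^ 2) ^ 2 * (2 * t)
          + 3 * m * (1 - t ^ 2) * (2 * t) ^ 2 + n * (2 * t) ^ 3 := by
      field_simp
    rw [h3] at h2
    linarith
  have hb : b = 0 := by
    have := eq_zero_at_zero (by fun_prop) key
    norm_num at this
    exact this
  subst hb
  have key2 : ∀ t : ℝ, 0 < t → 0 ≤ 2 * l * (3 + t ^ 4) - 12 * m * (1 - t ^ 2) - 8 * n * t := by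
    intro t ht
    refine nonneg_of_mul_nonneg_right (a := t ^ 2) ?_ (by positivity)
    linarith [key t]
  refine ⟨rfl, ?_, ?_⟩
  · have := nonneg_at_zero (by fun_prop) key2
    norm_num at this
    linarith
  · rintro rfl
    -- The constant terms cancel, so one more factor `t` splits off.
    have key3 : ∀ t : ℝ, 0 ≤ t * (4 * m * t ^ 3 + 12 * m * t - 8 * n) := by
      intro t
      rcases eq_or_ne t 0 with rfl | ht
      · simp
      refine nonneg_of_mul_nonneg_right (a := t ^ 2) ?_ (by positivity)
      linarith [key t]
    have := eq_zero_at_zero (by fun_prop) key3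
    norm_num at this
    exact this

/-- A symmetric trilinear form is determined by its cubic form. -/
theorem eq_zero_of_cubic_eq_zero {V : Type*} [AddCommGroup V] [Module ℝ V]
    {A : V →ₗ[ℝ] V →ₗ[ℝ] V →ₗ[ℝ] ℝ}
    (hsymm1 : ∀ u v w, A u v w = A v u w) (hsymm2 : ∀ u v w, A u v w = A u w v)
    (h : ∀ v, A v v v = 0) : A = 0 := by
  have h2 : ∀ u v, A u u v = 0 := by
    intro u v
    have hp := h (u + v)
    have hm := h (u - v)
    simp only [map_add, map_sub, LinearMap.add_apply, LinearMap.sub_apply, h] at hp hm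
    linarith [hsymm1 u v u, hsymm2 u u v, hsymm1 u v v, hsymm2 v u v]
  ext u v w
  have hp := h2 (u + v) w
  simp only [map_add, LinearMap.add_apply, h2] at hp
  have := hsymm1 u v w
  simp only [LinearMap.zero_apply]
  linarith

theorem continuous_cubic {V : Type*} [NormedAddCommGroup V] [InnerProductSpace ℝ V]
    [FiniteDimensional ℝ V] (A : V →ₗ[ℝ] V →ₗ[ℝ] V →ₗ[ℝ] ℝ) :
    Continuous fun v => A v v v := by
  let f := stdOrthonormalBasis ℝ V
  -- In coordinates the cubic form is a polynomial.
  have hf : (fun v => A v v v) = fun v =>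
      A (∑ i, ⟪f i, v⟫ • f i) (∑ i, ⟪f i, v⟫ • f i) (∑ i, ⟪f i, v⟫ • f i) := by
    simp only [f.sum_repr']
  rw [hf]
  simp only [map_sum, map_smul, LinearMap.sum_apply, LinearMap.smul_apply, smul_eq_mul]
  fun_prop

/-- **Ejiri-type frame lemma (pointwise version).**
Let `V` be a 2-dimensional real inner product space and `A` a nonzero symmetric
trilinear form on `V`. Then there is an orthonormal basis `(e₁, e₂)` of `V` and reals
`lam > 0`, `mu` with `lam ≥ 2 mu`, such that `A e₁ e₁ e₁ = lam`, `A e₁ e₁ e₂ = 0`,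
`A e₁ e₂ e₂ = mu`; and if `lam = 2 mu` then `A e₂ e₂ e₂ = 0`. -/
theorem stmt0 {V : Type*} [NormedAddCommGroup V] [InnerProductSpace ℝ V]
    (hdim : Module.finrank ℝ V = 2)
    (A : V →ₗ[ℝ] V →ₗ[ℝ] V →ₗ[ℝ] ℝ)
    (hsymm1 : ∀ u v w, A u v w = A v u w)
    (hsymm2 : ∀ u v w, A u v w = A u w v)
    (hA : A ≠ 0) :
    ∃ (e₁ e₂ : V) (lam mu : ℝ),
      ⟪e₁, e₁⟫ = 1 ∧ ⟪e₂, e₂⟫ = 1 ∧ ⟪e₁, e₂⟫ = 0 ∧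
      0 < lam ∧ 2 * mu ≤ lam ∧
      A e₁ e₁ e₁ = lam ∧ A e₁ e₁ e₂ = 0 ∧ A e₁ e₂ e₂ = mu ∧
      (lam = 2 * mu → A e₂ e₂ e₂ = 0) := by
  have : FiniteDimensional ℝ V := Module.finite_of_finrank_eq_succ hdim
  have : Nontrivial V := Module.nontrivial_of_finrank_eq_succ hdim
  obtain ⟨e₁, he₁, hmax⟩ := (isCompact_sphere (0 : V) 1).exists_isMaxOn
    (NormedSpace.sphere_nonempty.mpr zero_le_one) (continuous_cubic A).continuousOn
  have hmax : ∀ v : V, ‖v‖ = 1 → A v v v ≤ A e₁ e₁ e₁ := fun v hv => hmax (by simpa using hv)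
  have he₁ : ‖e₁‖ = 1 := by simpa using he₁
  obtain ⟨e, he⟩ := Orthonormal.exists_orthonormalBasis_extension_of_card_eq
    (𝕜 := ℝ) (ι := Fin 2) (by simpa using hdim) (v := fun _ => e₁) (s := {0})
    ⟨fun _ => he₁, fun i j hij => (hij (Subsingleton.elim i j)).elim⟩
  have he0 : e 0 = e₁ := he 0 rfl
  have h11 : ⟪e₁, e₁⟫ = 1 := by simp [he₁]
  have h22 : ⟪e 1, e 1⟫ = 1 := by simp
  have h12 : ⟪e₁, e 1⟫ = 0 := by rw [← he0]; exact e.orthonormal.2 (by decide)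
  have hpos : 0 < A e₁ e₁ e₁ := by
    by_contra! hle
    have hnonpos : ∀ v, A v v v ≤ 0 := by
      intro v
      rcases eq_or_ne v 0 with rfl | hv
      · simp
      have h1 := (hmax (‖v‖⁻¹ • v) (norm_smul_inv_norm hv)).trans hle
      simp only [map_smul, LinearMap.smul_apply, smul_eq_mul] at h1
      have hn : 0 < ‖v‖⁻¹ := by positivity
      by_contra! hcon
      have : 0 < ‖v‖⁻¹ * (‖v‖⁻¹ * (‖v‖⁻¹ * A v v v)) := by positivity
      linarith
    refine hA (eq_zero_of_cubic_eq_zero hsymm1 hsymm2 fun v => ?_)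
    have h1 := hnonpos (-v)
    simp only [map_neg, LinearMap.neg_apply, neg_neg] at h1
    linarith [hnonpos v]
  obtain ⟨hb, hm, hn⟩ := cubic_max_conditions (l := A e₁ e₁ e₁) (b := A e₁ e₁ (e 1))
    (m := A e₁ (e 1) (e 1)) (n := A (e 1) (e 1) (e 1)) (by
      intro c s hcs
      have hnorm : ‖c • e₁ + s • e 1‖ = 1 := by
        rw [← sq_eq_sq₀ (norm_nonneg _) zero_le_one, ← real_inner_self_eq_norm_sq]
        simp only [inner_add_left, inner_add_right, real_inner_smul_left, real_inner_smul_right,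
          h11, h22, h12, real_inner_comm e₁ (e 1)]
        linarith
      have h1 := hmax _ hnorm
      simp only [map_add, map_smul, LinearMap.add_apply, LinearMap.smul_apply, smul_eq_mul,
        hsymm1 (e 1) e₁, hsymm2 e₁ (e 1) e₁, hsymm2 (e 1) (e 1) e₁] at h1
      linarith)
  exact ⟨e₁, e 1, _, _, h11, h22, h12, hpos, hm, rfl, hb, rfl, hn⟩
end

section
/- Let Ω ⊆ ℝⁿ be open, a ≠ 0 a real number, and f : Ω → ℝ a smooth function with positive definite Hessian (f_{ij}) on Ω, inverse Hessian (f^{ij}), and D = det(f_{ij}). If f satisfies the affine maximal type equation ∑_{i,j} f^{ij} ∂_i∂_j(D^{a}) = 0 on Ω, then at every point of Ω: ∑_{i,j} f^{ij}( ∂_i∂_j(ln D) - (1/2) ∂_i(ln D) ∂_j(ln D) ) = -((2a+1)/2) · ∑_{i,j} f^{ij} ∂_i(ln D) ∂_j(ln D); equivalently, the trace of the Tchebychev operator satisfies tr𝒯 = n(2a+1)|T|². -/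
/-!
Write `L = ln D`. Since `D > 0` on `Ω`, near every point `D ^ a = exp (a L)`, so
`∂ᵢ∂ⱼ (D ^ a) = a D ^ a (∂ᵢ∂ⱼ L + a ∂ᵢ L ∂ⱼ L)` (`pderiv'_pderiv'_rpow`). Contracting with `f^{ij}`
and dividing by `a D ^ a ≠ 0`, the equation becomes `∑ f^{ij} ∂ᵢ∂ⱼ L = -a ∑ f^{ij} ∂ᵢ L ∂ⱼ L`;
subtracting `(1/2) ∑ f^{ij} ∂ᵢ L ∂ⱼ L` gives the claim.
-/

noncomputable section

/-- Partial derivative `∂ᵢ g` of a function on `ℝⁿ`. -/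
def pderiv' {n : ℕ} (g : (Fin n → ℝ) → ℝ) (i : Fin n) : (Fin n → ℝ) → ℝ :=
  fun x => fderiv ℝ g x (Pi.single i 1)

/-- The Hessian matrix `(f_{ij})` of `f` at `x`. -/
def hessMat {n : ℕ} (f : (Fin n → ℝ) → ℝ) (x : Fin n → ℝ) : Matrix (Fin n) (Fin n) ℝ :=
  Matrix.of fun i j => pderiv' (pderiv' f j) i x

/-- `D = det(f_{ij})`. -/
def hessDet {n : ℕ} (f : (Fin n → ℝ) → ℝ) : (Fin n → ℝ) → ℝ :=
  fun x => (hessMat f x).det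

theorem contDiffOn_pderiv' {n : ℕ} {Ω : Set (Fin n → ℝ)} (hΩ : IsOpen Ω)
    {g : (Fin n → ℝ) → ℝ} (hg : ContDiffOn ℝ (⊤ : ℕ∞) g Ω) (i : Fin n) :
    ContDiffOn ℝ (⊤ : ℕ∞) (pderiv' g i) Ω :=
  (hg.fderiv_of_isOpen hΩ (by simp)).clm_apply contDiffOn_const

theorem contDiffOn_hessDet {n : ℕ} {Ω : Set (Fin n → ℝ)} (hΩ : IsOpen Ω)
    {f : (Fin n → ℝ) → ℝ} (hf : ContDiffOn ℝ (⊤ : ℕ∞) f Ω) :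
    ContDiffOn ℝ (⊤ : ℕ∞) (hessDet f) Ω := by
  have h : hessDet f = fun x => ∑ σ : Equiv.Perm (Fin n),
      ((Equiv.Perm.sign σ : ℤ) : ℝ) * ∏ i, pderiv' (pderiv' f i) (σ i) x := by
    funext x
    simp [hessDet, hessMat, Matrix.det_apply']
  rw [h]
  refine ContDiffOn.sum fun σ _ => contDiffOn_const.mul ?_
  exact contDiffOn_prod fun i _ => contDiffOn_pderiv' hΩ (contDiffOn_pderiv' hΩ hf i) (σ i)

theorem pderiv'_congr {n : ℕ} {g h : (Fin n → ℝ) → ℝ} {Ω : Set (Fin n → ℝ)} (hΩ : IsOpen Ω)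
    (hgh : ∀ y ∈ Ω, g y = h y) (i : Fin n) {x : Fin n → ℝ} (hx : x ∈ Ω) :
    pderiv' g i x = pderiv' h i x := by
  have : g =ᶠ[nhds x] h := Filter.eventually_of_mem (hΩ.mem_nhds hx) hgh
  simp only [pderiv', this.fderiv_eq]

/-- First derivative of a real power via the logarithmic derivative:
`∂ᵢ (u ^ a) = a u ^ a ∂ᵢ (ln u)` for positive smooth `u`. -/
theorem pderiv'_rpow {n : ℕ} {Ω : Set (Fin n → ℝ)} (hΩ : IsOpen Ω) {u : (Fin n → ℝ) → ℝ}
    (hu : ContDiffOn ℝ (⊤ : ℕ∞) u Ω) (hpos : ∀ y ∈ Ω, 0 < u y) (a : ℝ) (i : Fin n)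
    {x : Fin n → ℝ} (hx : x ∈ Ω) :
    pderiv' (fun y => u y ^ a) i x
      = a * (u x ^ a * pderiv' (fun y => Real.log (u y)) i x) := by
  have hd : DifferentiableAt ℝ u x :=
    (hu.differentiableOn (by simp)).differentiableAt (hΩ.mem_nhds hx)
  have hL : DifferentiableAt ℝ (fun y => Real.log (u y)) x := hd.log (hpos x hx).ne'
  rw [pderiv'_congr (h := fun y => Real.exp (Real.log (u y) * a)) hΩ
    (fun y hy => Real.rpow_def_of_pos (hpos y hy) a) i hx]
  have := (hL.hasFDerivAt.mul_const a).exp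
  simp only [pderiv', this.fderiv, Real.rpow_def_of_pos (hpos x hx)]
  simp only [smul_apply, smul_eq_mul]
  ring

theorem pderiv'_pderiv'_rpow {n : ℕ} {Ω : Set (Fin n → ℝ)} (hΩ : IsOpen Ω)
    {u : (Fin n → ℝ) → ℝ} (hu : ContDiffOn ℝ (⊤ : ℕ∞) u Ω) (hpos : ∀ y ∈ Ω, 0 < u y)
    (a : ℝ) (i j : Fin n) {x : Fin n → ℝ} (hx : x ∈ Ω) :
    pderiv' (pderiv' (fun y => u y ^ a) j) i x
      = a * u x ^ a * (pderiv' (pderiv' (fun y => Real.log (u y)) j) i x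
          + a * (pderiv' (fun y => Real.log (u y)) i x
            * pderiv' (fun y => Real.log (u y)) j x)) := by
  rw [pderiv'_congr hΩ (fun y hy => pderiv'_rpow hΩ hu hpos a j hy) i hx]
  have hP : DifferentiableAt ℝ (fun y => u y ^ a) x :=
    ((hu.rpow_const_of_ne fun y hy => (hpos y hy).ne').differentiableOn
      (by simp)).differentiableAt (hΩ.mem_nhds hx)
  have hLj : DifferentiableAt ℝ (pderiv' (fun y => Real.log (u y)) j) x :=
    ((contDiffOn_pderiv' hΩ (hu.log fun y hy => (hpos y hy).ne') j).differentiableOn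
      (by simp)).differentiableAt (hΩ.mem_nhds hx)
  have key : pderiv' (fun y => a * (u y ^ a * pderiv' (fun z => Real.log (u z)) j y)) i x
      = a * (u x ^ a * pderiv' (pderiv' (fun y => Real.log (u y)) j) i x
        + pderiv' (fun z => Real.log (u z)) j x * pderiv' (fun y => u y ^ a) i x) := by
    have h := (hP.hasFDerivAt.mul hLj.hasFDerivAt).const_mul a
    have h' := congrArg (fun T => T (Pi.single i 1)) h.fderiv
    simpa [pderiv', mul_add] using h'
  rw [key, pderiv'_rpow hΩ hu hpos a i hx]
  ring

/-- **Lemma 4.3.** If smooth `f` with positive definite Hessian on open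
`Ω ⊆ ℝⁿ` satisfies the affine maximal type equation `∑ f^{ij} ∂ᵢ∂ⱼ(D^a) = 0` (`a ≠ 0`),
then on `Ω`:
`∑ f^{ij}(∂ᵢ∂ⱼ ln D - (1/2)∂ᵢ ln D ∂ⱼ ln D) = -((2a+1)/2) ∑ f^{ij} ∂ᵢ ln D ∂ⱼ ln D`,
i.e. `tr𝒯 = n(2a+1)|T|²`. -/
theorem stmt2 (n : ℕ) (Ω : Set (Fin n → ℝ)) (hΩ : IsOpen Ω) (a : ℝ) (ha : a ≠ 0)
    (f : (Fin n → ℝ) → ℝ) (hf : ContDiffOn ℝ (⊤ : ℕ∞) f Ω)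
    (hpos : ∀ x ∈ Ω, (hessMat f x).PosDef)
    (heq : ∀ x ∈ Ω,
      ∑ i : Fin n, ∑ j : Fin n, (hessMat f x)⁻¹ i j *
          pderiv' (pderiv' (fun y => hessDet f y ^ a) j) i x = 0) :
    ∀ x ∈ Ω,
      ∑ i : Fin n, ∑ j : Fin n, (hessMat f x)⁻¹ i j *
          (pderiv' (pderiv' (fun y => Real.log (hessDet f y)) j) i x
            - (1/2) * pderiv' (fun y => Real.log (hessDet f y)) i x
                * pderiv' (fun y => Real.log (hessDet f y)) j x)
        = -((2 * a + 1) / 2) *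
            ∑ i : Fin n, ∑ j : Fin n, (hessMat f x)⁻¹ i j *
              pderiv' (fun y => Real.log (hessDet f y)) i x
                * pderiv' (fun y => Real.log (hessDet f y)) j x := by
  intro x hx
  have hD : ∀ y ∈ Ω, 0 < hessDet f y := fun y hy => (hpos y hy).det_pos
  have hc : a * hessDet f x ^ a ≠ 0 := mul_ne_zero ha (Real.rpow_pos_of_pos (hD x hx) a).ne'
  have h := heq x hx
  simp only [pderiv'_pderiv'_rpow hΩ (contDiffOn_hessDet hΩ hf) hD a _ _ hx,
    mul_left_comm _ (a * hessDet f x ^ a), ← Finset.mul_sum] at h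
  have h0 := (mul_eq_zero.mp h).resolve_left hc
  -- the two sides of the claim differ exactly by the left-hand side of `h0`
  rw [← sub_eq_zero, ← h0]
  simp only [Finset.mul_sum, ← Finset.sum_sub_distrib]
  refine Finset.sum_congr rfl fun i _ => Finset.sum_congr rfl fun j _ => ?_
  ring
end
end

section
/- Let c > 0 and define f(x₁,x₂) = -(1/(4c²)) ln x₁ + x₂²/2 on Ω = {(x₁,x₂) ∈ ℝ² : x₁ > 0}. Then the Hessian of f is positive definite on Ω; f satisfies the Calabi affine maximal equation ∑_{i,j} f^{ij}( ∂_i∂_j(ln D) - (1/2) ∂_i(ln D) ∂_j(ln D) ) = 0 on Ω; and the squared Tchebychev norm satisfies (1/16) ∑_{k,l} f^{kl} ∂_k(ln D) ∂_l(ln D) = c² at every point of Ω. -/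
/-!
The function `f` separates variables, so its Hessian is diagonal: `f₁₁ = 1/(4c²x₁²)`, `f₁₂ = 0`,
`f₂₂ = 1`. Hence `D = (2c x₁)⁻²` and `ln D = -2 ln (2c x₁)`, whose only nonzero derivatives are
`∂₁ ln D = -2/x₁` and `∂₁∂₁ ln D = 2/x₁²`. As `∂₁∂₁ ln D = (1/2) (∂₁ ln D)²`, the Calabi equation
holds, and `|T|² = (1/16) · 4c²x₁² · 4/x₁² = c²`.

With the conventions `Real.log x = log |x|`, `Real.log 0 = 0`, `0⁻¹ = 0` and `deriv = 0` at points
of non-differentiability, the formulas for the derivatives hold for every `c ≠ 0` and every real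
`x₁`. They are therefore stated as equalities of functions on `ℝ²`, which can be rewritten inside
further derivatives.
-/

noncomputable section
open Real

/-- Partial derivative in the first variable. -/
def p1 (g : ℝ → ℝ → ℝ) : ℝ → ℝ → ℝ := fun x y => deriv (fun s => g s y) x

/-- Partial derivative in the second variable. -/
def p2 (g : ℝ → ℝ → ℝ) : ℝ → ℝ → ℝ := fun x y => deriv (fun s => g x s) y

/-- The Hessian matrix `(f_{ij})` of `f : ℝ² → ℝ`. -/
def hess2 (f : ℝ → ℝ → ℝ) (x y : ℝ) : Matrix (Fin 2) (Fin 2) ℝ :=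
  !![p1 (p1 f) x y, p2 (p1 f) x y; p1 (p2 f) x y, p2 (p2 f) x y]

/-- `D = det(f_{ij}) = f₁₁ f₂₂ - f₁₂ f₂₁`. -/
def Dd (f : ℝ → ℝ → ℝ) : ℝ → ℝ → ℝ := fun x y =>
  p1 (p1 f) x y * p2 (p2 f) x y - p2 (p1 f) x y * p1 (p2 f) x y

/-- `ln D`. -/
def Ld (f : ℝ → ℝ → ℝ) : ℝ → ℝ → ℝ := fun x y => Real.log (Dd f x y)

/-- The Laplace–Beltrami operator of the Calabi metric applied to `ln D`:
`Δ ln D = ∑ f^{ij} ( ∂ᵢ∂ⱼ ln D - (1/2) ∂ᵢ ln D ∂ⱼ ln D )`,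
written out using the explicit inverse `(f^{ij}) = (1/D)·[[f₂₂, -f₁₂],[-f₂₁, f₁₁]]`. -/
def calabiOp (f : ℝ → ℝ → ℝ) : ℝ → ℝ → ℝ := fun x y =>
  (p2 (p2 f) x y / Dd f x y) *
      (p1 (p1 (Ld f)) x y - (1/2) * p1 (Ld f) x y * p1 (Ld f) x y)
  + (-(p2 (p1 f) x y) / Dd f x y) *
      (p2 (p1 (Ld f)) x y - (1/2) * p1 (Ld f) x y * p2 (Ld f) x y)
  + (-(p1 (p2 f) x y) / Dd f x y) *
      (p1 (p2 (Ld f)) x y - (1/2) * p2 (Ld f) x y * p1 (Ld f) x y)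
  + (p1 (p1 f) x y / Dd f x y) *
      (p2 (p2 (Ld f)) x y - (1/2) * p2 (Ld f) x y * p2 (Ld f) x y)

/-- The squared Tchebychev norm `|T|² = (1/16) ∑ f^{kl} ∂ₖ ln D ∂ₗ ln D`. -/
def tchebSq (f : ℝ → ℝ → ℝ) : ℝ → ℝ → ℝ := fun x y =>
  (1/16) * ((p2 (p2 f) x y / Dd f x y) * (p1 (Ld f) x y * p1 (Ld f) x y)
    + (-(p2 (p1 f) x y) / Dd f x y) * (p1 (Ld f) x y * p2 (Ld f) x y)
    + (-(p1 (p2 f) x y) / Dd f x y) * (p2 (Ld f) x y * p1 (Ld f) x y)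
    + (p1 (p1 f) x y / Dd f x y) * (p2 (Ld f) x y * p2 (Ld f) x y))

/-- The affine maximal type operator with parameter `a`:
`∑ f^{ij} ∂ᵢ∂ⱼ (D^a)`. -/
def ampOp (f : ℝ → ℝ → ℝ) (a : ℝ) : ℝ → ℝ → ℝ := fun x y =>
  (p2 (p2 f) x y / Dd f x y) * p1 (p1 (fun u v => Dd f u v ^ a)) x y
  + (-(p2 (p1 f) x y) / Dd f x y) * p2 (p1 (fun u v => Dd f u v ^ a)) x y
  + (-(p1 (p2 f) x y) / Dd f x y) * p1 (p2 (fun u v => Dd f u v ^ a)) x y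
  + (p1 (p1 f) x y / Dd f x y) * p2 (p2 (fun u v => Dd f u v ^ a)) x y

/-- The function `f(x₁,x₂) = -(1/(4c²)) ln x₁ + x₂²/2`, in the form in which it occurs in
`stmt3`. -/
abbrev calabiSol (c : ℝ) : ℝ → ℝ → ℝ :=
  fun x₁ x₂ => -(1/(4*c^2)) * Real.log x₁ + x₂^2/2

lemma p1_calabiSol (c : ℝ) :
    p1 (calabiSol c) = fun x _ => -(1/(4*c^2)) * x⁻¹ := by
  funext x y
  simp [p1]

lemma p2_calabiSol (c : ℝ) : p2 (calabiSol c) = fun _ y => y := by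
  funext x y
  simp [p2]

lemma p1_p1_calabiSol (c : ℝ) :
    p1 (p1 (calabiSol c)) = fun x _ => ((2 * c * x)^2)⁻¹ := by
  rw [p1_calabiSol]
  funext x y
  simp [p1]
  ring

lemma p2_p1_calabiSol (c : ℝ) : p2 (p1 (calabiSol c)) = fun _ _ => 0 := by
  rw [p1_calabiSol]
  funext x y
  simp [p2]

lemma p1_p2_calabiSol (c : ℝ) : p1 (p2 (calabiSol c)) = fun _ _ => 0 := by
  rw [p2_calabiSol]
  funext x y
  simp [p1]

lemma p2_p2_calabiSol (c : ℝ) : p2 (p2 (calabiSol c)) = fun _ _ => 1 := by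
  rw [p2_calabiSol]
  funext x y
  simp [p2]

lemma Dd_calabiSol (c : ℝ) : Dd (calabiSol c) = fun x _ => ((2 * c * x)^2)⁻¹ := by
  funext x y
  simp [Dd, p1_p1_calabiSol, p2_p1_calabiSol, p1_p2_calabiSol, p2_p2_calabiSol]

/-- Keeping the constant inside the logarithm makes the formula true at `x = 0` as well, where
both sides are `0`. -/
lemma Ld_calabiSol (c : ℝ) :
    Ld (calabiSol c) = fun x _ => -2 * Real.log (2 * c * x) := by
  funext x y
  simp only [Ld, Dd_calabiSol, Real.log_inv, Real.log_pow]
  push_cast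
  ring

lemma p1_Ld_calabiSol {c : ℝ} (hc : c ≠ 0) :
    p1 (Ld (calabiSol c)) = fun x _ => -2 * x⁻¹ := by
  rw [Ld_calabiSol]
  funext x y
  have h := deriv_comp_mul_left (2 * c) Real.log x
  simp only [p1, deriv_const_mul_field, h, Real.deriv_log, smul_eq_mul, mul_inv]
  field_simp

lemma p2_Ld_calabiSol (c : ℝ) : p2 (Ld (calabiSol c)) = fun _ _ => 0 := by
  rw [Ld_calabiSol]
  funext x y
  simp [p2]

lemma p1_p1_Ld_calabiSol {c : ℝ} (hc : c ≠ 0) :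
    p1 (p1 (Ld (calabiSol c))) = fun x _ => 2 * (x^2)⁻¹ := by
  rw [p1_Ld_calabiSol hc]
  funext x y
  simp [p1]

lemma p2_p2_Ld_calabiSol (c : ℝ) : p2 (p2 (Ld (calabiSol c))) = fun _ _ => 0 := by
  rw [p2_Ld_calabiSol]
  funext x y
  simp [p2]

/-- **Theorem 4.4(i), existence.** For `c > 0`, the function
`f(x₁,x₂) = -(1/(4c²)) ln x₁ + x₂²/2` on `{x₁ > 0}` has positive definite Hessian,
satisfies the Calabi affine maximal equation `Δ ln D = 0`, and its squared
Tchebychev norm equals `c²`. -/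
theorem stmt3 (c : ℝ) (hc : 0 < c) :
    ∀ x y : ℝ, 0 < x →
      (hess2 (fun x₁ x₂ => -(1/(4*c^2)) * Real.log x₁ + x₂^2/2) x y).PosDef ∧
      calabiOp (fun x₁ x₂ => -(1/(4*c^2)) * Real.log x₁ + x₂^2/2) x y = 0 ∧
      tchebSq (fun x₁ x₂ => -(1/(4*c^2)) * Real.log x₁ + x₂^2/2) x y = c^2 := by
  intro x y hx
  have hc' : c ≠ 0 := hc.ne'
  have hx' : x ≠ 0 := hx.ne'
  change (hess2 (calabiSol c) x y).PosDef ∧ calabiOp (calabiSol c) x y = 0 ∧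
    tchebSq (calabiSol c) x y = c^2
  refine ⟨?_, ?_, ?_⟩
  · have h : hess2 (calabiSol c) x y = Matrix.diagonal ![((2 * c * x)^2)⁻¹, 1] := by
      ext i j
      fin_cases i <;> fin_cases j <;>
        simp [hess2, p1_p1_calabiSol, p2_p1_calabiSol, p1_p2_calabiSol, p2_p2_calabiSol]
    rw [h]
    refine Matrix.PosDef.diagonal fun i => ?_
    fin_cases i
    · change 0 < ((2 * c * x)^2)⁻¹
      positivity
    · exact one_pos
  · -- The second derivatives of `ln D` go first: once the first derivatives inside them are
    -- rewritten, their formulas no longer match.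
    simp only [calabiOp, p1_p1_Ld_calabiSol hc', p2_p2_Ld_calabiSol]
    simp only [p1_p1_calabiSol, p2_p1_calabiSol, p1_p2_calabiSol, p2_p2_calabiSol,
      Dd_calabiSol, p1_Ld_calabiSol hc', p2_Ld_calabiSol]
    field_simp
    ring
  · simp only [tchebSq, p1_p1_calabiSol, p2_p1_calabiSol, p1_p2_calabiSol, p2_p2_calabiSol,
      Dd_calabiSol, p1_Ld_calabiSol hc', p2_Ld_calabiSol]
    field_simp
    ring
end
end

section
/- Let c₁, c₂ > 0 and c > 0 with 1/c₁ + 1/c₂ = 4c², and define f(x₁,x₂) = -c₁ ln x₁ - c₂ ln x₂ on Ω = {(x₁,x₂) ∈ ℝ² : x₁ > 0, x₂ > 0}. Then the Hessian of f is positive definite on Ω; f satisfies the Calabi affine maximal equation ∑_{i,j} f^{ij}( ∂_i∂_j(ln D) - (1/2) ∂_i(ln D) ∂_j(ln D) ) = 0 on Ω; and the squared Tchebychev norm satisfies (1/16) ∑_{k,l} f^{kl} ∂_k(ln D) ∂_l(ln D) = c² at every point of Ω. -/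
/-! Away from the axes `f = -c₁ ln x - c₂ ln y` has the diagonal Hessian `diag(c₁/x², c₂/y²)`, so
`ln D = ln (c₁c₂) - 2 ln x - 2 ln y`. Writing `L = ln D`, `L₁ = -2/x` and `L₁₁ = 2/x² = L₁²/2`, and
likewise in `y`, so the diagonal terms of `Δ ln D` vanish; the mixed terms carry the coefficient
`f¹² = 0`. Finally `|T|² = (1/16) (x²/c₁ · 4/x² + y²/c₂ · 4/y²) = (1/c₁ + 1/c₂)/4 = c²`.

Mathlib's `deriv` satisfies `deriv log s = s⁻¹` and `deriv (·⁻¹) s = -(s²)⁻¹` even at `s = 0`, so the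
derivatives of `f` are computed as global identities of functions; those of `ln D` are only computed
on the open quadrant, where `p1_congr` and `p2_congr` allow replacing a function by an equal one. -/

noncomputable section
open Real

theorem p1_congr {g h : ℝ → ℝ → ℝ} (H : ∀ x y, 0 < x → 0 < y → g x y = h x y) :
    ∀ x y, 0 < x → 0 < y → p1 g x y = p1 h x y := fun x y hx hy =>
  Filter.EventuallyEq.deriv_eq <| by
    filter_upwards [lt_mem_nhds hx] with s hs using H s y hs hy

theorem p2_congr {g h : ℝ → ℝ → ℝ} (H : ∀ x y, 0 < x → 0 < y → g x y = h x y) :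
    ∀ x y, 0 < x → 0 < y → p2 g x y = p2 h x y := fun x y hx hy =>
  Filter.EventuallyEq.deriv_eq <| by
    filter_upwards [lt_mem_nhds hy] with s hs using H x s hx hs

/-- First partial derivatives of `k + a ln x + b ln y`. The constant term lets this apply both to
`f` and to `ln D`. -/
theorem p1_logs (k a b : ℝ) :
    p1 (fun x y => k + a * Real.log x + b * Real.log y) = fun x _ => a * x⁻¹ := by
  funext x y
  simp [p1, deriv_add_const, deriv_const_add]

theorem p2_logs (k a b : ℝ) :
    p2 (fun x y => k + a * Real.log x + b * Real.log y) = fun _ y => b * y⁻¹ := by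
  funext x y
  simp [p2, deriv_const_add]

theorem p1_inv_fst (a : ℝ) : p1 (fun x _ => a * x⁻¹) = fun x _ => -a * (x ^ 2)⁻¹ := by
  funext x y
  simp [p1]

theorem p2_inv_snd (a : ℝ) : p2 (fun _ y => a * y⁻¹) = fun _ y => -a * (y ^ 2)⁻¹ := by
  funext x y
  simp [p2]

theorem p2_inv_fst (a : ℝ) : p2 (fun x _ => a * x⁻¹) = fun _ _ => 0 := by
  funext x y
  simp [p2]

theorem p1_inv_snd (a : ℝ) : p1 (fun _ y => a * y⁻¹) = fun _ _ => 0 := by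
  funext x y
  simp [p1]

/-- **Theorem 4.4(ii), existence.** For `c₁, c₂ > 0` and `c > 0` with
`1/c₁ + 1/c₂ = 4c²`, the function `f(x₁,x₂) = -c₁ ln x₁ - c₂ ln x₂` on
`{x₁ > 0, x₂ > 0}` has positive definite Hessian, satisfies the Calabi affine maximal
equation `Δ ln D = 0`, and its squared Tchebychev norm equals `c²`. -/
theorem stmt4 (c c₁ c₂ : ℝ) (hc : 0 < c) (hc₁ : 0 < c₁) (hc₂ : 0 < c₂)
    (hrel : 1/c₁ + 1/c₂ = 4*c^2) :
    ∀ x y : ℝ, 0 < x → 0 < y →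
      (hess2 (fun x₁ x₂ => -c₁ * Real.log x₁ - c₂ * Real.log x₂) x y).PosDef ∧
      calabiOp (fun x₁ x₂ => -c₁ * Real.log x₁ - c₂ * Real.log x₂) x y = 0 ∧
      tchebSq (fun x₁ x₂ => -c₁ * Real.log x₁ - c₂ * Real.log x₂) x y = c^2 := by
  intro x y hx hy
  set f : ℝ → ℝ → ℝ := fun x₁ x₂ => -c₁ * Real.log x₁ - c₂ * Real.log x₂ with hf
  have hf' : f = fun x y => 0 + -c₁ * Real.log x + -c₂ * Real.log y := by
    funext x y
    simp only [hf]
    ring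
  have f1 : p1 f = fun x _ => -c₁ * x⁻¹ := by rw [hf', p1_logs]
  have f2 : p2 f = fun _ y => -c₂ * y⁻¹ := by rw [hf', p2_logs]
  have f11 : p1 (p1 f) = fun x _ => c₁ * (x ^ 2)⁻¹ := by rw [f1, p1_inv_fst, neg_neg]
  have f22 : p2 (p2 f) = fun _ y => c₂ * (y ^ 2)⁻¹ := by rw [f2, p2_inv_snd, neg_neg]
  have f12 : p2 (p1 f) = fun _ _ => 0 := by rw [f1, p2_inv_fst]
  have f21 : p1 (p2 f) = fun _ _ => 0 := by rw [f2, p1_inv_snd]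
  have hD : ∀ x y, Dd f x y = c₁ * (x ^ 2)⁻¹ * (c₂ * (y ^ 2)⁻¹) := by
    intro x y
    simp [Dd, f11, f22, f12, f21]
  have hL : ∀ x y, 0 < x → 0 < y →
      Ld f x y = Real.log (c₁ * c₂) + -2 * Real.log x + -2 * Real.log y := by
    intro x y hx hy
    rw [Ld, hD, Real.log_mul (by positivity) (by positivity),
      Real.log_mul (by positivity) (by positivity), Real.log_mul (by positivity) (by positivity),
      Real.log_mul (by positivity) (by positivity), Real.log_inv, Real.log_inv, Real.log_pow,
      Real.log_pow]
    push_cast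
    ring
  have L1 : ∀ x y, 0 < x → 0 < y → p1 (Ld f) x y = -2 * x⁻¹ := by
    intro x y hx hy
    rw [p1_congr hL x y hx hy, p1_logs]
  have L2 : ∀ x y, 0 < x → 0 < y → p2 (Ld f) x y = -2 * y⁻¹ := by
    intro x y hx hy
    rw [p2_congr hL x y hx hy, p2_logs]
  have L11 : p1 (p1 (Ld f)) x y = 2 * (x ^ 2)⁻¹ := by
    rw [p1_congr L1 x y hx hy, p1_inv_fst, neg_neg]
  have L22 : p2 (p2 (Ld f)) x y = 2 * (y ^ 2)⁻¹ := by
    rw [p2_congr L2 x y hx hy, p2_inv_snd, neg_neg]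
  refine ⟨?_, ?_, ?_⟩
  · have hdiag : hess2 f x y = Matrix.diagonal ![c₁ * (x ^ 2)⁻¹, c₂ * (y ^ 2)⁻¹] := by
      ext i j
      fin_cases i <;> fin_cases j <;> simp [hess2, f11, f22, f12, f21]
    rw [hdiag]
    refine Matrix.PosDef.diagonal fun i => ?_
    fin_cases i
    · exact show 0 < c₁ * (x ^ 2)⁻¹ by positivity
    · exact show 0 < c₂ * (y ^ 2)⁻¹ by positivity
  · simp only [calabiOp, hD, L11, L22, L1 x y hx hy, L2 x y hx hy, f11, f22, f12, f21]
    field_simp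
    ring
  · have hc2 : c ^ 2 = (1 / c₁ + 1 / c₂) / 4 := by linarith
    simp only [tchebSq, hD, L1 x y hx hy, L2 x y hx hy, f11, f22, f12, f21, hc2]
    field_simp
    ring
end
end

section
/- Let c > 0 and define f(x₁,x₂) = -(9/(16c²)) ln(x₁ - x₂²/2) on Ω = {(x₁,x₂) ∈ ℝ² : x₁ > x₂²/2}. Then the Hessian of f is positive definite on Ω; f satisfies the affine maximal type equation with parameter a = -2/3, namely ∑_{i,j} f^{ij} ∂_i∂_j(D^{-2/3}) = 0 on Ω; and the squared Tchebychev norm satisfies (1/16) ∑_{k,l} f^{kl} ∂_k(ln D) ∂_l(ln D) = c² at every point of Ω. -/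
/-!
With `k = 9/(16c²)` and `u = x - y²/2`, the function `f = -k ln u` has on `Ω = {u > 0}`
`f₁₁ = k/u²`, `f₁₂ = f₂₁ = -ky/u²`, `f₂₂ = k/u + ky²/u²`, hence `D = k²/u³`.
The Hessian is positive definite because its quadratic form is
`(k/u²) ((v₁ - y v₂)² + u v₂²)`.
The exponent `-2/3` turns `D` into the polynomial `D^(-2/3) = (k²)^(-2/3) u²`, and
`ln D = ln k² - 3 ln u`, so both remaining claims become rational identities in `k, y, u`;
the second one yields `|T|² = 9/(16k) = c²`.

Since `Ω` is open, a partial derivative at a point of `Ω` depends only on the values on `Ω`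
(`p1_eq`, `p2_eq`), which allows the closed forms to be differentiated repeatedly.
-/

noncomputable section
open Real

/-- The partial derivative `∂₁` at a point of `Ω` may be computed from any closed form
valid on `Ω`. -/
lemma p1_eq {g h : ℝ → ℝ → ℝ} {d x y : ℝ} (hgh : ∀ x y, y^2/2 < x → g x y = h x y)
    (hxy : y^2/2 < x) (hd : HasDerivAt (fun s => h s y) d x) : p1 g x y = d := by
  refine (hd.congr_of_eventuallyEq ?_).deriv
  filter_upwards [lt_mem_nhds hxy] with s hs using hgh s y hs

/-- The partial derivative `∂₂` at a point of `Ω` may be computed from any closed form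
valid on `Ω`. -/
lemma p2_eq {g h : ℝ → ℝ → ℝ} {d x y : ℝ} (hgh : ∀ x y, y^2/2 < x → g x y = h x y)
    (hxy : y^2/2 < x) (hd : HasDerivAt (fun s => h x s) d y) : p2 g x y = d := by
  refine (hd.congr_of_eventuallyEq ?_).deriv
  have hc : Continuous fun s : ℝ => s^2/2 := by fun_prop
  filter_upwards [hc.continuousAt.eventually_lt continuousAt_const hxy] with s hs
    using hgh x s hs

lemma hasDerivAt_u1 (x y : ℝ) : HasDerivAt (fun s : ℝ => s - y^2/2) 1 x :=
  (hasDerivAt_id' x).sub_const _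

lemma hasDerivAt_u2 (x y : ℝ) : HasDerivAt (fun s : ℝ => x - s^2/2) (-y) y := by
  refine HasDerivAt.congr_deriv ((((hasDerivAt_id' y).fun_pow 2).div_const 2).const_sub x) ?_
  simp

/-- The function `-k ln(x - y²/2)`. -/
def fk (k : ℝ) : ℝ → ℝ → ℝ := fun x₁ x₂ => -k * Real.log (x₁ - x₂^2/2)

section
variable {k : ℝ}

lemma fk_1 : ∀ x y : ℝ, y^2/2 < x → p1 (fk k) x y = -k / (x - y^2/2) := by
  intro x y h
  have hu : x - y^2/2 ≠ 0 := (sub_pos.2 h).ne'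
  refine p1_eq (fun _ _ _ => rfl) h ?_
  refine HasDerivAt.congr_deriv (((hasDerivAt_u1 x y).log hu).const_mul (-k)) ?_
  ring

lemma fk_2 : ∀ x y : ℝ, y^2/2 < x → p2 (fk k) x y = k * y / (x - y^2/2) := by
  intro x y h
  have hu : x - y^2/2 ≠ 0 := (sub_pos.2 h).ne'
  refine p2_eq (fun _ _ _ => rfl) h ?_
  refine HasDerivAt.congr_deriv (((hasDerivAt_u2 x y).log hu).const_mul (-k)) ?_
  ring

lemma fk_11 : ∀ x y : ℝ, y^2/2 < x → p1 (p1 (fk k)) x y = k / (x - y^2/2)^2 := by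
  intro x y h
  have hu : x - y^2/2 ≠ 0 := (sub_pos.2 h).ne'
  refine p1_eq fk_1 h ?_
  refine HasDerivAt.congr_deriv ((hasDerivAt_const x (-k)).fun_div (hasDerivAt_u1 x y) hu) ?_
  ring

lemma fk_12 : ∀ x y : ℝ, y^2/2 < x → p2 (p1 (fk k)) x y = -(k * y) / (x - y^2/2)^2 := by
  intro x y h
  have hu : x - y^2/2 ≠ 0 := (sub_pos.2 h).ne'
  refine p2_eq fk_1 h ?_
  refine HasDerivAt.congr_deriv ((hasDerivAt_const y (-k)).fun_div (hasDerivAt_u2 x y) hu) ?_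
  ring

lemma fk_21 : ∀ x y : ℝ, y^2/2 < x → p1 (p2 (fk k)) x y = -(k * y) / (x - y^2/2)^2 := by
  intro x y h
  have hu : x - y^2/2 ≠ 0 := (sub_pos.2 h).ne'
  refine p1_eq fk_2 h ?_
  refine HasDerivAt.congr_deriv ((hasDerivAt_const x (k * y)).fun_div (hasDerivAt_u1 x y) hu) ?_
  ring

lemma fk_22 : ∀ x y : ℝ, y^2/2 < x →
    p2 (p2 (fk k)) x y = (k * (x - y^2/2) + k * y^2) / (x - y^2/2)^2 := by
  intro x y h
  have hu : x - y^2/2 ≠ 0 := (sub_pos.2 h).ne'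
  refine p2_eq fk_2 h ?_
  refine HasDerivAt.congr_deriv (((hasDerivAt_id' y).const_mul k).fun_div (hasDerivAt_u2 x y) hu) ?_
  ring

lemma fk_Dd : ∀ x y : ℝ, y^2/2 < x → Dd (fk k) x y = k^2 / (x - y^2/2)^3 := by
  intro x y h
  have hu : x - y^2/2 ≠ 0 := (sub_pos.2 h).ne'
  simp only [Dd, fk_11 x y h, fk_12 x y h, fk_21 x y h, fk_22 x y h]
  generalize x - y^2/2 = u at hu
  field_simp
  ring

lemma fk_Ld (hk : 0 < k) : ∀ x y : ℝ, y^2/2 < x →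
    Ld (fk k) x y = Real.log (k^2) - 3 * Real.log (x - y^2/2) := by
  intro x y h
  have hu : x - y^2/2 ≠ 0 := (sub_pos.2 h).ne'
  rw [Ld, fk_Dd x y h, Real.log_div (by positivity) (by positivity), Real.log_pow _ 3]
  norm_num

lemma fk_Ld1 (hk : 0 < k) : ∀ x y : ℝ, y^2/2 < x →
    p1 (Ld (fk k)) x y = -3 / (x - y^2/2) := by
  intro x y h
  have hu : x - y^2/2 ≠ 0 := (sub_pos.2 h).ne'
  refine p1_eq (fk_Ld hk) h ?_
  refine HasDerivAt.congr_deriv ((((hasDerivAt_u1 x y).log hu).const_mul 3).const_sub (Real.log (k^2))) ?_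
  ring

lemma fk_Ld2 (hk : 0 < k) : ∀ x y : ℝ, y^2/2 < x →
    p2 (Ld (fk k)) x y = 3 * y / (x - y^2/2) := by
  intro x y h
  have hu : x - y^2/2 ≠ 0 := (sub_pos.2 h).ne'
  refine p2_eq (fk_Ld hk) h ?_
  refine HasDerivAt.congr_deriv ((((hasDerivAt_u2 x y).log hu).const_mul 3).const_sub (Real.log (k^2))) ?_
  ring

/-- The power `D^(-2/3)` is a constant multiple of `u²`. -/
lemma fk_pow : ∀ x y : ℝ, y^2/2 < x →
    Dd (fk k) x y ^ (-2/3 : ℝ) = (k^2) ^ (-2/3 : ℝ) * (x - y^2/2)^2 := by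
  intro x y h
  have hu : 0 < x - y^2/2 := sub_pos.2 h
  rw [fk_Dd x y h, Real.div_rpow (by positivity) (by positivity), div_eq_mul_inv]
  congr 1
  rw [← Real.rpow_neg (by positivity), ← Real.rpow_natCast _ 3, ← Real.rpow_mul hu.le,
    ← Real.rpow_natCast _ 2]
  norm_num

lemma fk_pow1 : ∀ x y : ℝ, y^2/2 < x →
    p1 (fun u v => Dd (fk k) u v ^ (-2/3 : ℝ)) x y
      = 2 * (k^2) ^ (-2/3 : ℝ) * (x - y^2/2) := by
  intro x y h
  refine p1_eq fk_pow h ?_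
  refine HasDerivAt.congr_deriv (((hasDerivAt_u1 x y).fun_pow 2).const_mul ((k^2) ^ (-2/3 : ℝ))) ?_
  push_cast
  ring

lemma fk_pow2 : ∀ x y : ℝ, y^2/2 < x →
    p2 (fun u v => Dd (fk k) u v ^ (-2/3 : ℝ)) x y
      = -2 * (k^2) ^ (-2/3 : ℝ) * (y * (x - y^2/2)) := by
  intro x y h
  refine p2_eq fk_pow h ?_
  refine HasDerivAt.congr_deriv (((hasDerivAt_u2 x y).fun_pow 2).const_mul ((k^2) ^ (-2/3 : ℝ))) ?_
  push_cast
  ring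

lemma fk_pow11 : ∀ x y : ℝ, y^2/2 < x →
    p1 (p1 (fun u v => Dd (fk k) u v ^ (-2/3 : ℝ))) x y = 2 * (k^2) ^ (-2/3 : ℝ) := by
  intro x y h
  refine p1_eq fk_pow1 h ?_
  refine HasDerivAt.congr_deriv ((hasDerivAt_u1 x y).const_mul (2 * (k^2) ^ (-2/3 : ℝ))) ?_
  ring

lemma fk_pow12 : ∀ x y : ℝ, y^2/2 < x →
    p2 (p1 (fun u v => Dd (fk k) u v ^ (-2/3 : ℝ))) x y = -2 * (k^2) ^ (-2/3 : ℝ) * y := by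
  intro x y h
  refine p2_eq fk_pow1 h ?_
  refine HasDerivAt.congr_deriv ((hasDerivAt_u2 x y).const_mul (2 * (k^2) ^ (-2/3 : ℝ))) ?_
  ring

lemma fk_pow21 : ∀ x y : ℝ, y^2/2 < x →
    p1 (p2 (fun u v => Dd (fk k) u v ^ (-2/3 : ℝ))) x y = -2 * (k^2) ^ (-2/3 : ℝ) * y := by
  intro x y h
  refine p1_eq fk_pow2 h ?_
  refine HasDerivAt.congr_deriv (((hasDerivAt_u1 x y).const_mul y).const_mul (-2 * (k^2) ^ (-2/3 : ℝ))) ?_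
  ring

lemma fk_pow22 : ∀ x y : ℝ, y^2/2 < x →
    p2 (p2 (fun u v => Dd (fk k) u v ^ (-2/3 : ℝ))) x y
      = -2 * (k^2) ^ (-2/3 : ℝ) * ((x - y^2/2) - y^2) := by
  intro x y h
  refine p2_eq fk_pow2 h ?_
  refine HasDerivAt.congr_deriv (((hasDerivAt_id' y).fun_mul (hasDerivAt_u2 x y)).const_mul
    (-2 * (k^2) ^ (-2/3 : ℝ))) ?_
  ring

lemma fk_posDef (hk : 0 < k) {x y : ℝ} (h : y^2/2 < x) : (hess2 (fk k) x y).PosDef := by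
  have hu : 0 < x - y^2/2 := sub_pos.2 h
  rw [hess2, fk_11 x y h, fk_12 x y h, fk_21 x y h, fk_22 x y h]
  generalize x - y^2/2 = u at hu
  refine Matrix.PosDef.of_dotProduct_mulVec_pos ?_ fun v hv => ?_
  · ext i j
    fin_cases i <;> fin_cases j <;> simp
  -- The quadratic form of the Hessian, as a sum of squares (indices starting at `0`).
  · have key : 0 < k / u^2 * ((v 0 - y * v 1)^2 + u * (v 1)^2) := by
      refine mul_pos (by positivity) ?_
      by_cases h1 : v 1 = 0
      · have h0 : v 0 ≠ 0 := by
          intro h0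
          apply hv
          ext i
          fin_cases i
          · exact h0
          · exact h1
        simp only [h1, mul_zero, sub_zero]
        positivity
      · positivity
    refine key.trans_eq ?_
    simp [dotProduct, Matrix.mulVec, Fin.sum_univ_two]
    field_simp
    ring

lemma fk_ampOp (hk : 0 < k) {x y : ℝ} (h : y^2/2 < x) : ampOp (fk k) (-2/3) x y = 0 := by
  have hu : x - y^2/2 ≠ 0 := (sub_pos.2 h).ne'
  rw [ampOp, fk_11 x y h, fk_12 x y h, fk_21 x y h, fk_22 x y h, fk_Dd x y h,
    fk_pow11 x y h, fk_pow12 x y h, fk_pow21 x y h, fk_pow22 x y h]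
  generalize x - y^2/2 = u at hu
  generalize (k^2) ^ (-2/3 : ℝ) = K
  field_simp
  ring

lemma fk_tchebSq (hk : 0 < k) {x y : ℝ} (h : y^2/2 < x) :
    tchebSq (fk k) x y = 9 / (16 * k) := by
  have hu : x - y^2/2 ≠ 0 := (sub_pos.2 h).ne'
  rw [tchebSq, fk_11 x y h, fk_12 x y h, fk_21 x y h, fk_22 x y h, fk_Dd x y h,
    fk_Ld1 hk x y h, fk_Ld2 hk x y h]
  generalize x - y^2/2 = u at hu
  field_simp
  ring

end

/-- **Theorem 4.4(iii), existence.** For `c > 0`, the function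
`f(x₁,x₂) = -(9/(16c²)) ln(x₁ - x₂²/2)` on `{x₁ > x₂²/2}` has positive definite Hessian,
satisfies the affine maximal type equation with parameter `a = -2/3`, and its squared
Tchebychev norm equals `c²`. -/
theorem stmt5 (c : ℝ) (hc : 0 < c) :
    ∀ x y : ℝ, y^2/2 < x →
      (hess2 (fun x₁ x₂ => -(9/(16*c^2)) * Real.log (x₁ - x₂^2/2)) x y).PosDef ∧
      ampOp (fun x₁ x₂ => -(9/(16*c^2)) * Real.log (x₁ - x₂^2/2)) (-2/3) x y = 0 ∧
      tchebSq (fun x₁ x₂ => -(9/(16*c^2)) * Real.log (x₁ - x₂^2/2)) x y = c^2 := by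
  intro x y h
  have hk : 0 < 9/(16*c^2) := by positivity
  refine ⟨fk_posDef hk h, fk_ampOp hk h, (fk_tchebSq hk h).trans ?_⟩
  field_simp
end
end

section
/- Let c > 0 and define f(x₁,x₂) = -(9/(16c²)) ln x₁ + x₂²/(2x₁) on Ω = {(x₁,x₂) ∈ ℝ² : x₁ > 0}. Then the Hessian of f is positive definite on Ω; f satisfies the affine maximal type equation with parameter a = -1/3, namely ∑_{i,j} f^{ij} ∂_i∂_j(D^{-1/3}) = 0 on Ω; and the squared Tchebychev norm satisfies (1/16) ∑_{k,l} f^{kl} ∂_k(ln D) ∂_l(ln D) = c² at every point of Ω. -/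
/-!
With `k = 9/(16c²)`, the function is `f = -k ln x + y²/(2x)`, whose Hessian on `x > 0` has entries
`f₁₁ = k/x² + y²/x³`, `f₁₂ = f₂₁ = -y/x²`, `f₂₂ = 1/x`. The terms in `y` cancel in the determinant,
so `D = k/x³` depends on `x` only. Hence `D^(-1/3) = k^(-1/3) x` is linear, all its second
derivatives vanish, and the affine maximal type equation holds term by term. Moreover
`∂₁ ln D = -3/x` and `∂₂ ln D = 0`, so `|T|² = (1/16) (f₂₂/D) (9/x²) = 9/(16k) = c²`.

The formulas for the derivatives hold on the open half plane `x > 0`; `p1_of_eqOn` and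
`p2_of_eqOn` allow such a formula to be differentiated again.
-/

noncomputable section
open Real

/-- `∂₁ g` may be computed from any expression `h` that agrees with `g` on the half plane `x > 0`,
as the half plane is open. -/
lemma p1_of_eqOn {g h : ℝ → ℝ → ℝ} (H : ∀ x y, 0 < x → g x y = h x y) {x y d : ℝ} (hx : 0 < x)
    (hd : HasDerivAt (fun s => h s y) d x) : p1 g x y = d := by
  have e : (fun s => g s y) =ᶠ[nhds x] fun s => h s y := by
    filter_upwards [lt_mem_nhds hx] with s hs using H s y hs
  exact (hd.congr_of_eventuallyEq e).deriv

/-- `∂₂ g` may be computed from any expression `h` that agrees with `g` on the half plane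
`x > 0`. -/
lemma p2_of_eqOn {g h : ℝ → ℝ → ℝ} (H : ∀ x y, 0 < x → g x y = h x y) {x y d : ℝ} (hx : 0 < x)
    (hd : HasDerivAt (fun s => h x s) d y) : p2 g x y = d := by
  have e : (fun s => g x s) = fun s => h x s := funext fun s => H x s hx
  unfold p2
  rw [e]
  exact hd.deriv

/-- The function `-k ln x + y²/(2x)`. -/
def fK (k : ℝ) : ℝ → ℝ → ℝ := fun x₁ x₂ => -k * Real.log x₁ + x₂^2/(2*x₁)

lemma hasDerivAt_div_pow (a : ℝ) (n : ℕ) {x : ℝ} (hx : 0 < x) :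
    HasDerivAt (fun s : ℝ => a / s ^ n) (-(n * a) / x ^ (n + 1)) x := by
  have h := ((hasDerivAt_pow n x).inv (pow_ne_zero n hx.ne')).const_mul a
  refine (h.congr_of_eventuallyEq (.of_eq ?_)).congr_deriv ?_
  · funext s
    simp [div_eq_mul_inv]
  rcases n with _ | n
  · simp
  · have := hx.ne'
    simp only [Nat.add_sub_cancel]
    field_simp
    ring

lemma fK_1 (k x y : ℝ) (hx : 0 < x) : p1 (fK k) x y = -k / x ^ 1 + (-(y^2/2)) / x ^ 2 := by
  refine p1_of_eqOn (h := fun x y => -k * Real.log x + (y^2/2) / x ^ 1)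
    (fun x y hx => ?_) hx ?_
  · simp only [fK]; field_simp
  · refine HasDerivAt.congr_deriv (((Real.hasDerivAt_log hx.ne').const_mul (-k)).add
      (hasDerivAt_div_pow (y^2/2) 1 hx)) ?_
    push_cast; ring

lemma fK_2 (k x y : ℝ) (hx : 0 < x) : p2 (fK k) x y = y / x ^ 1 := by
  refine p2_of_eqOn (h := fK k) (fun _ _ _ => rfl) hx ?_
  refine HasDerivAt.congr_deriv ((((hasDerivAt_id y).pow 2).div_const (2*x)).const_add (-k * Real.log x)) ?_
  simp; field_simp

lemma fK_11 (k x y : ℝ) (hx : 0 < x) : p1 (p1 (fK k)) x y = k / x ^ 2 + y^2 / x ^ 3 := by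
  refine p1_of_eqOn (fK_1 k) hx ?_
  refine HasDerivAt.congr_deriv ((hasDerivAt_div_pow (-k) 1 hx).add (hasDerivAt_div_pow (-(y^2/2)) 2 hx)) ?_
  push_cast; ring

lemma fK_12 (k x y : ℝ) (hx : 0 < x) : p2 (p1 (fK k)) x y = -y / x ^ 2 := by
  refine p2_of_eqOn (fK_1 k) hx ?_
  refine HasDerivAt.congr_deriv ((((((hasDerivAt_id y).pow 2).div_const 2).neg).div_const (x^2)).const_add
    (-k / x ^ 1)) ?_
  simp

lemma fK_21 (k x y : ℝ) (hx : 0 < x) : p1 (p2 (fK k)) x y = -y / x ^ 2 := by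
  refine p1_of_eqOn (fK_2 k) hx ?_
  refine HasDerivAt.congr_deriv (hasDerivAt_div_pow y 1 hx) ?_
  push_cast; ring

lemma fK_22 (k x y : ℝ) (hx : 0 < x) : p2 (p2 (fK k)) x y = 1 / x := by
  refine p2_of_eqOn (fK_2 k) hx ?_
  refine HasDerivAt.congr_deriv ((hasDerivAt_id y).div_const (x ^ 1)) ?_
  simp

lemma fK_D (k x y : ℝ) (hx : 0 < x) : Dd (fK k) x y = k / x ^ 3 := by
  simp only [Dd, fK_11 k x y hx, fK_12 k x y hx, fK_21 k x y hx, fK_22 k x y hx]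
  have := hx.ne'
  field_simp
  ring

lemma fK_L (k : ℝ) (hk : 0 < k) (x y : ℝ) (hx : 0 < x) :
    Ld (fK k) x y = Real.log k - 3 * Real.log x := by
  rw [Ld, fK_D k x y hx, Real.log_div hk.ne' (pow_pos hx 3).ne', Real.log_pow]
  norm_num

lemma fK_L1 (k : ℝ) (hk : 0 < k) (x y : ℝ) (hx : 0 < x) : p1 (Ld (fK k)) x y = -3 / x := by
  refine p1_of_eqOn (fK_L k hk) hx ?_
  refine HasDerivAt.congr_deriv (((Real.hasDerivAt_log hx.ne').const_mul 3).const_sub (Real.log k)) ?_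
  ring

lemma fK_L2 (k : ℝ) (hk : 0 < k) (x y : ℝ) (hx : 0 < x) : p2 (Ld (fK k)) x y = 0 :=
  p2_of_eqOn (fK_L k hk) hx (hasDerivAt_const _ _)

/-- `D^(-1/3)` is a linear function of `x`; this is what singles out the exponent `-1/3`. -/
lemma fK_pow (k : ℝ) (hk : 0 < k) (x y : ℝ) (hx : 0 < x) :
    Dd (fK k) x y ^ (-1/3 : ℝ) = k ^ (-1/3 : ℝ) * x := by
  have h3 : (x ^ 3) ^ (-1/3 : ℝ) = x⁻¹ := by
    rw [← Real.rpow_natCast, ← Real.rpow_mul hx.le, ← Real.rpow_neg_one]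
    norm_num
  rw [fK_D k x y hx, Real.div_rpow hk.le (pow_pos hx 3).le, h3, div_inv_eq_mul]

/-- A function that equals `a x` on the half plane has vanishing second derivatives there. -/
lemma second_derivs_zero {g : ℝ → ℝ → ℝ} {a : ℝ} (H : ∀ x y, 0 < x → g x y = a * x) (x y : ℝ)
    (hx : 0 < x) : p1 (p1 g) x y = 0 ∧ p2 (p1 g) x y = 0 ∧ p1 (p2 g) x y = 0 ∧
      p2 (p2 g) x y = 0 := by
  have h1 : ∀ x y, 0 < x → p1 g x y = a := fun x y hx =>
    p1_of_eqOn H hx (by simpa using (hasDerivAt_id x).const_mul a)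
  have h2 : ∀ x y, 0 < x → p2 g x y = 0 := fun x y hx =>
    p2_of_eqOn H hx (hasDerivAt_const _ _)
  exact ⟨p1_of_eqOn h1 hx (hasDerivAt_const _ _), p2_of_eqOn h1 hx (hasDerivAt_const _ _),
    p1_of_eqOn h2 hx (hasDerivAt_const _ _), p2_of_eqOn h2 hx (hasDerivAt_const _ _)⟩

/-- The quadratic form of the Hessian at `v` is `k v₀²/x² + (y v₀/x - v₁)²/x`. -/
lemma fK_posDef (k : ℝ) (hk : 0 < k) (x y : ℝ) (hx : 0 < x) : (hess2 (fK k) x y).PosDef := by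
  rw [hess2, fK_11 k x y hx, fK_12 k x y hx, fK_21 k x y hx, fK_22 k x y hx]
  refine Matrix.PosDef.of_dotProduct_mulVec_pos ?_ fun v hv => ?_
  · ext i j
    fin_cases i <;> fin_cases j <;> simp
  · have e : star v ⬝ᵥ (!![k / x ^ 2 + y ^ 2 / x ^ 3, -y / x ^ 2; -y / x ^ 2, 1 / x].mulVec v)
        = k / x ^ 2 * v 0 ^ 2 + (y / x * v 0 - v 1) ^ 2 / x := by
      simp [Matrix.mulVec, dotProduct, Fin.sum_univ_two]
      field_simp
      ring
    rw [e]
    by_cases h0 : v 0 = 0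
    · have h1 : v 1 ≠ 0 := fun h1 => hv (by ext i; fin_cases i <;> simp [h0, h1])
      rw [h0]
      simp only [mul_zero, zero_sub, neg_sq, ne_eq, OfNat.ofNat_ne_zero, not_false_eq_true,
        zero_pow, zero_add]
      positivity
    · positivity

/-- **Theorem 4.4(iv), existence.** For `c > 0`, the function
`f(x₁,x₂) = -(9/(16c²)) ln x₁ + x₂²/(2x₁)` on `{x₁ > 0}` has positive definite Hessian,
satisfies the affine maximal type equation with parameter `a = -1/3`, and its squared
Tchebychev norm equals `c²`. -/
theorem stmt6 (c : ℝ) (hc : 0 < c) :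
    ∀ x y : ℝ, 0 < x →
      (hess2 (fun x₁ x₂ => -(9/(16*c^2)) * Real.log x₁ + x₂^2/(2*x₁)) x y).PosDef ∧
      ampOp (fun x₁ x₂ => -(9/(16*c^2)) * Real.log x₁ + x₂^2/(2*x₁)) (-1/3) x y = 0 ∧
      tchebSq (fun x₁ x₂ => -(9/(16*c^2)) * Real.log x₁ + x₂^2/(2*x₁)) x y = c^2 := by
  intro x y hx
  set k := 9 / (16 * c ^ 2) with hkdef
  have hk : 0 < k := by positivity
  change (hess2 (fK k) x y).PosDef ∧ ampOp (fK k) (-1/3) x y = 0 ∧ tchebSq (fK k) x y = c ^ 2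
  refine ⟨fK_posDef k hk x y hx, ?_, ?_⟩
  · obtain ⟨h11, h12, h21, h22⟩ := second_derivs_zero (fK_pow k hk) x y hx
    simp only [ampOp, h11, h12, h21, h22, mul_zero, add_zero]
  · simp only [tchebSq, fK_L1 k hk x y hx, fK_L2 k hk x y hx, fK_22 k x y hx, fK_D k x y hx]
    rw [hkdef]
    field_simp
    ring
end
end

section
/- Let c₁, c₂, c₃ ∈ ℝ and define x : ℝ² → ℝ³ by x(u₁,u₂) = (x₁(u₁), x₂(u₂), x₃(u₁,u₂)) where x₁(u₁) = ∫₀^{u₁} e^{(c₁/2)t² + c₂t} dt, x₂(u₂) = ∫₀^{u₂} e^{-(c₁/2)t² + c₃t} dt, and x₃(u₁,u₂) = ∫₀^{u₁} e^{(c₁/2)t² + c₂t}(∫₀^{t} e^{-(c₁/2)s² - c₂s} ds) dt + ∫₀^{u₂} e^{-(c₁/2)t² + c₃t}(∫₀^{t} e^{(c₁/2)s² - c₃s} ds) dt. Then x is smooth and satisfies, at every (u₁,u₂) ∈ ℝ²: ∂²x/∂u₁² = (c₁u₁ + c₂)·∂x/∂u₁ + (0,0,1), ∂²x/∂u₂²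 = (-c₁u₂ + c₃)·∂x/∂u₂ + (0,0,1), and ∂²x/∂u₁∂u₂ = 0. -/
/-!
The surface is a sum of a curve in `u₁` and a curve in `u₂`, so the mixed derivative vanishes.
With `φ' = q φ` and `φ ψ = 1`, where `φ` and `ψ` are the two Gaussian-type integrands and `q` is
the affine function `c₁ u₁ + c₂` (resp. `-c₁ u₂ + c₃`), the fundamental theorem of calculus gives
`(∫ φ)'' = q φ` and `(∫ φ ∫ ψ)'' = q (φ ∫ ψ) + φ ψ = q (φ ∫ ψ) + 1`, which are the structure
equations componentwise. Smoothness holds because a primitive of a smooth function is smooth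
(`contDiff_primitive`).
-/

noncomputable section
open Real

/-- Partial derivative in the first variable, for vector-valued functions of two reals. -/
def P1 {E : Type*} [NormedAddCommGroup E] [NormedSpace ℝ E]
    (g : ℝ → ℝ → E) : ℝ → ℝ → E := fun a b => deriv (fun s => g s b) a

/-- Partial derivative in the second variable, for vector-valued functions of two reals. -/
def P2 {E : Type*} [NormedAddCommGroup E] [NormedSpace ℝ E]
    (g : ℝ → ℝ → E) : ℝ → ℝ → E := fun a b => deriv (fun s => g a s) b

/-- The Calabi surface of Theorem 4.6, parameterized by (4.61). -/
def calabiSurf (c₁ c₂ c₃ : ℝ) : ℝ → ℝ → ℝ × ℝ × ℝ := fun u₁ u₂ =>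
  (∫ t in (0:ℝ)..u₁, Real.exp (c₁/2 * t^2 + c₂ * t),
   ∫ t in (0:ℝ)..u₂, Real.exp (-(c₁/2) * t^2 + c₃ * t),
   (∫ t in (0:ℝ)..u₁, Real.exp (c₁/2 * t^2 + c₂ * t) *
       ∫ s in (0:ℝ)..t, Real.exp (-(c₁/2) * s^2 - c₂ * s))
   + ∫ t in (0:ℝ)..u₂, Real.exp (-(c₁/2) * t^2 + c₃ * t) *
       ∫ s in (0:ℝ)..t, Real.exp (c₁/2 * s^2 - c₃ * s))

lemma hasDerivAt_primitive {f : ℝ → ℝ} (hf : Continuous f) (a : ℝ) :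
    HasDerivAt (fun u => ∫ t in (0:ℝ)..u, f t) (f a) a :=
  intervalIntegral.integral_hasDerivAt_right (hf.intervalIntegrable _ _)
    (hf.stronglyMeasurableAtFilter _ _) hf.continuousAt

lemma contDiff_primitive {f : ℝ → ℝ} (hf : ContDiff ℝ (⊤ : ℕ∞) f) :
    ContDiff ℝ (⊤ : ℕ∞) (fun u => ∫ t in (0:ℝ)..u, f t) := by
  rw [contDiff_infty_iff_deriv]
  refine ⟨fun a => (hasDerivAt_primitive hf.continuous a).differentiableAt, ?_⟩
  rwa [funext fun a => (hasDerivAt_primitive hf.continuous a).deriv]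

lemma hasDerivAt_exp_quadratic (a b u : ℝ) :
    HasDerivAt (fun t => Real.exp (a/2 * t^2 + b * t))
      ((a * u + b) * Real.exp (a/2 * u^2 + b * u)) u := by
  have h : HasDerivAt (fun t : ℝ => a/2 * t^2 + b * t) (a * u + b) u := by
    refine (((hasDerivAt_pow 2 u).const_mul (a/2)).add
      ((hasDerivAt_id u).const_mul b)).congr_deriv ?_
    norm_num
    ring
  simpa [mul_comm] using h.exp

/-- Product rule for `φ ∫ ψ` when `φ = exp (a t² / 2 + b t)` and `ψ = φ⁻¹`: the term `φ ψ`
contributes the constant `1`. -/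
lemma hasDerivAt_exp_mul_primitive (a b u : ℝ) :
    HasDerivAt (fun t => Real.exp (a/2 * t^2 + b * t) *
        ∫ s in (0:ℝ)..t, Real.exp (-(a/2) * s^2 - b * s))
      ((a * u + b) * (Real.exp (a/2 * u^2 + b * u) *
        ∫ s in (0:ℝ)..u, Real.exp (-(a/2) * s^2 - b * s)) + 1) u := by
  have hψ : Continuous fun s : ℝ => Real.exp (-(a/2) * s^2 - b * s) := by fun_prop
  refine ((hasDerivAt_exp_quadratic a b u).mul (hasDerivAt_primitive hψ u)).congr_deriv ?_
  rw [← Real.exp_add, show a/2 * u^2 + b * u + (-(a/2) * u^2 - b * u) = 0 by ring, Real.exp_zero]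
  ring

lemma contDiff_exp_mul_primitive (a b : ℝ) :
    ContDiff ℝ (⊤ : ℕ∞) fun t => Real.exp (a/2 * t^2 + b * t) *
        ∫ s in (0:ℝ)..t, Real.exp (-(a/2) * s^2 - b * s) := by
  refine ContDiff.mul (by fun_prop) (contDiff_primitive ?_)
  fun_prop

/-- The second-variable curve has the same shape as the first with `(c₁, c₂)` replaced by
`(-c₁, c₃)`. -/
lemma calabiSurf_eq (c₁ c₂ c₃ u₁ u₂ : ℝ) : calabiSurf c₁ c₂ c₃ u₁ u₂ =
    (∫ t in (0:ℝ)..u₁, Real.exp (c₁/2 * t^2 + c₂ * t),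
     ∫ t in (0:ℝ)..u₂, Real.exp (-c₁/2 * t^2 + c₃ * t),
     (∫ t in (0:ℝ)..u₁, Real.exp (c₁/2 * t^2 + c₂ * t) *
         ∫ s in (0:ℝ)..t, Real.exp (-(c₁/2) * s^2 - c₂ * s))
     + ∫ t in (0:ℝ)..u₂, Real.exp (-c₁/2 * t^2 + c₃ * t) *
         ∫ s in (0:ℝ)..t, Real.exp (-(-c₁/2) * s^2 - c₃ * s)) := by
  simp only [calabiSurf, neg_div, neg_neg]

lemma P1_calabiSurf (c₁ c₂ c₃ : ℝ) : P1 (calabiSurf c₁ c₂ c₃) = fun u₁ _ =>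
    (Real.exp (c₁/2 * u₁^2 + c₂ * u₁), 0, Real.exp (c₁/2 * u₁^2 + c₂ * u₁) *
      ∫ s in (0:ℝ)..u₁, Real.exp (-(c₁/2) * s^2 - c₂ * s)) := by
  funext u₁ u₂
  simp only [P1, calabiSurf_eq]
  have hφ : Continuous fun t : ℝ => Real.exp (c₁/2 * t^2 + c₂ * t) := by fun_prop
  exact ((hasDerivAt_primitive hφ u₁).prodMk ((hasDerivAt_const u₁ _).prodMk
    ((hasDerivAt_primitive (contDiff_exp_mul_primitive c₁ c₂).continuous u₁).add_const _))).deriv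

lemma P2_calabiSurf (c₁ c₂ c₃ : ℝ) : P2 (calabiSurf c₁ c₂ c₃) = fun _ u₂ =>
    (0, Real.exp (-c₁/2 * u₂^2 + c₃ * u₂), Real.exp (-c₁/2 * u₂^2 + c₃ * u₂) *
      ∫ s in (0:ℝ)..u₂, Real.exp (-(-c₁/2) * s^2 - c₃ * s)) := by
  funext u₁ u₂
  simp only [P2, calabiSurf_eq]
  have hφ : Continuous fun t : ℝ => Real.exp (-c₁/2 * t^2 + c₃ * t) := by fun_prop
  exact ((hasDerivAt_const u₂ _).prodMk ((hasDerivAt_primitive hφ u₂).prodMk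
    ((hasDerivAt_primitive (contDiff_exp_mul_primitive (-c₁) c₃).continuous u₂).const_add _))).deriv

/-- **Gauss structure equations (4.78)–(4.80).** The parameterization
`x` of the surface (4.61) is smooth and satisfies
`x_{u₁u₁} = (c₁u₁+c₂) x_{u₁} + (0,0,1)`, `x_{u₂u₂} = (-c₁u₂+c₃) x_{u₂} + (0,0,1)`,
and `x_{u₁u₂} = 0`. -/
theorem stmt7 (c₁ c₂ c₃ : ℝ) :
    ContDiff ℝ (⊤ : ℕ∞) (fun p : ℝ × ℝ => calabiSurf c₁ c₂ c₃ p.1 p.2) ∧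
    (∀ u₁ u₂ : ℝ, P1 (P1 (calabiSurf c₁ c₂ c₃)) u₁ u₂
        = (c₁ * u₁ + c₂) • P1 (calabiSurf c₁ c₂ c₃) u₁ u₂ + ((0:ℝ), (0:ℝ), (1:ℝ))) ∧
    (∀ u₁ u₂ : ℝ, P2 (P2 (calabiSurf c₁ c₂ c₃)) u₁ u₂
        = (-c₁ * u₂ + c₃) • P2 (calabiSurf c₁ c₂ c₃) u₁ u₂ + ((0:ℝ), (0:ℝ), (1:ℝ))) ∧
    (∀ u₁ u₂ : ℝ, P2 (P1 (calabiSurf c₁ c₂ c₃)) u₁ u₂ = 0) := by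
  refine ⟨?_, fun u₁ u₂ => ?_, fun u₁ u₂ => ?_, fun u₁ u₂ => ?_⟩
  · simp only [calabiSurf_eq]
    have hφ (a b : ℝ) : ContDiff ℝ (⊤ : ℕ∞) fun t : ℝ => Real.exp (a/2 * t^2 + b * t) := by
      fun_prop
    exact ((contDiff_primitive (hφ c₁ c₂)).comp contDiff_fst).prodMk
      (((contDiff_primitive (hφ (-c₁) c₃)).comp contDiff_snd).prodMk
        (((contDiff_primitive (contDiff_exp_mul_primitive c₁ c₂)).comp contDiff_fst).add
          ((contDiff_primitive (contDiff_exp_mul_primitive (-c₁) c₃)).comp contDiff_snd)))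
  · rw [P1_calabiSurf]
    refine ((hasDerivAt_exp_quadratic c₁ c₂ u₁).prodMk ((hasDerivAt_const u₁ (0:ℝ)).prodMk
      (hasDerivAt_exp_mul_primitive c₁ c₂ u₁))).deriv.trans ?_
    simp
  · rw [P2_calabiSurf]
    refine ((hasDerivAt_const u₂ (0:ℝ)).prodMk ((hasDerivAt_exp_quadratic (-c₁) c₃ u₂).prodMk
      (hasDerivAt_exp_mul_primitive (-c₁) c₃ u₂))).deriv.trans ?_
    simp
  · rw [P1_calabiSurf]
    exact deriv_const u₂ _
end
end

section
/- Let c > 1/2, set γ = √(4c²-1)/2 and α = -2/√(4c²-1) (so that αγ = -1). Define x(t,u) = (e^{u/2} cos(γu) sinh t, e^{u/2} sin(γu) sinh t, cosh t). Then for every t ≠ 0 and every u ∈ ℝ with |γu| < π/2, the point (x₁,x₂,x₃) = x(t,u) satisfies x₁ ≠ 0 and x₃² - (x₁² + x₂²)·exp(α·arctan(x₂/x₁)) = 1. -/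
/-!
In polar coordinates the surface has `x₁² + x₂² = e^u sinh² t`, and since `|γu| < π/2` the angle
`arctan (x₂ / x₁)` is exactly `γu`. As `αγ = -1`, the exponential factor equals `e^{-u}`, so the
left-hand side reduces to `cosh² t - sinh² t = 1`.
-/

open Real

/-- **Case (2.3.3) of Theorem 6.2.** Let `c > 1/2`,
`γ = √(4c²-1)/2`, `α = -2/√(4c²-1)`. The parameterized surface
`x(t,u) = (e^{u/2} cos(γu) sinh t, e^{u/2} sin(γu) sinh t, cosh t)` satisfies, for
`t ≠ 0` and `|γu| < π/2`, `x₁ ≠ 0` and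
`x₃² - (x₁² + x₂²)·exp(α·arctan(x₂/x₁)) = 1`. -/
theorem stmt17 (c γ α : ℝ) (hc : 1/2 < c)
    (hγ : γ = Real.sqrt (4*c^2 - 1) / 2) (hα : α = -2 / Real.sqrt (4*c^2 - 1)) :
    ∀ t u : ℝ, t ≠ 0 → |γ * u| < π/2 →
      Real.exp (u/2) * Real.cos (γ*u) * Real.sinh t ≠ 0 ∧
      (Real.cosh t)^2 -
          ((Real.exp (u/2) * Real.cos (γ*u) * Real.sinh t)^2
            + (Real.exp (u/2) * Real.sin (γ*u) * Real.sinh t)^2) *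
          Real.exp (α * Real.arctan
            ((Real.exp (u/2) * Real.sin (γ*u) * Real.sinh t)
              / (Real.exp (u/2) * Real.cos (γ*u) * Real.sinh t)))
        = 1 := by
  intro t u ht hu
  have hs : 0 < Real.sqrt (4*c^2 - 1) := Real.sqrt_pos.mpr (by nlinarith)
  have hαγ : α * γ = -1 := by
    rw [hα, hγ]
    field_simp
  obtain ⟨h1, h2⟩ := abs_lt.mp hu
  have hcos : Real.cos (γ*u) ≠ 0 := (Real.cos_pos_of_mem_Ioo ⟨h1, h2⟩).ne'
  have hsinh : Real.sinh t ≠ 0 := Real.sinh_ne_zero.mpr ht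
  have hexp : Real.exp (u/2) ≠ 0 := (Real.exp_pos _).ne'
  refine ⟨mul_ne_zero (mul_ne_zero hexp hcos) hsinh, ?_⟩
  have hquot : (Real.exp (u/2) * Real.sin (γ*u) * Real.sinh t)
      / (Real.exp (u/2) * Real.cos (γ*u) * Real.sinh t) = Real.tan (γ*u) := by
    rw [Real.tan_eq_sin_div_cos]
    field_simp
  have hαu : α * (γ * u) = -u := by
    rw [← mul_assoc, hαγ, neg_one_mul]
  -- The radial growth `e^u` of `x₁² + x₂²` cancels against `exp (α · γu) = e^{-u}`.
  have hcancel : Real.exp (u/2) ^ 2 * Real.exp (-u) = 1 := by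
    rw [← Real.exp_nat_mul, ← Real.exp_add, Real.exp_eq_one_iff]
    push_cast
    ring
  rw [hquot, Real.arctan_tan h1 h2, hαu]
  linear_combination Real.cosh_sq t
    - Real.exp (u/2) ^ 2 * Real.exp (-u) * Real.sinh t ^ 2 * Real.sin_sq_add_cos_sq (γ*u)
    - Real.sinh t ^ 2 * hcancel
end

section
/- Let c = √3/2 and define φ = (φ₁, φ₂) : ℝ² → ℝ² by φ₁(t,u) = e^{cu} tanh t and φ₂(t,u) = e^{cu}/cosh t. Then: (1) φ₂(t,u) > 0 for all (t,u); (2) at every (t,u) ∈ ℝ², (∂φ₁/∂t)² + (∂φ₂/∂t)² = φ₂², (∂φ₁/∂u)² + (∂φ₂/∂u)² = (3/4)cosh²t · φ₂², and (∂φ₁/∂t)(∂φ₁/∂u) + (∂φ₂/∂t)(∂φ₂/∂u) = 0; (3) φ is a bijection from ℝ² onto the upper half-plane {(v₁,v₂) ∈ ℝ² : v₂ > 0}. -/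
/-!
The key identity is `φ₁ = φ₂ · sinh t`, i.e. the slope `v₁ / v₂` of a point in the image determines
`t`, because `sinh` is a bijection of `ℝ`; then `v₂ · cosh t = exp (c u)` determines `u`. This gives
bijectivity onto the upper half-plane, with inverse `t = arsinh (v₁ / v₂)`,
`u = log (v₂ cosh t) / c`. The metric identities follow from the explicit partial derivatives and
`cosh² - sinh² = 1`.
-/

noncomputable section
open Real

/-- Partial derivative in the first variable. -/
def pt (g : ℝ → ℝ → ℝ) : ℝ → ℝ → ℝ := fun t u => deriv (fun s => g s u) t

/-- Partial derivative in the second variable. -/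
def pu (g : ℝ → ℝ → ℝ) : ℝ → ℝ → ℝ := fun t u => deriv (fun s => g t s) u

/-- `φ₁(t,u) = e^{cu} tanh t` with `c = √3/2`. -/
def φ₁ : ℝ → ℝ → ℝ := fun t u => Real.exp (Real.sqrt 3 / 2 * u) * Real.tanh t

/-- `φ₂(t,u) = e^{cu}/cosh t` with `c = √3/2`. -/
def φ₂ : ℝ → ℝ → ℝ := fun t u => Real.exp (Real.sqrt 3 / 2 * u) / Real.cosh t

lemma hasDerivAt_exp_half_sqrt_three (u : ℝ) :
    HasDerivAt (fun s => Real.exp (Real.sqrt 3 / 2 * s))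
      (Real.exp (Real.sqrt 3 / 2 * u) * (Real.sqrt 3 / 2)) u := by
  simpa using ((hasDerivAt_id u).const_mul (Real.sqrt 3 / 2)).exp

lemma pt_φ₁ (t u : ℝ) :
    pt φ₁ t u = Real.exp (Real.sqrt 3 / 2 * u) / Real.cosh t ^ 2 := by
  have hc : Real.cosh t ≠ 0 := (Real.cosh_pos t).ne'
  have h := ((Real.hasDerivAt_sinh t).div (Real.hasDerivAt_cosh t) hc).const_mul
    (Real.exp (Real.sqrt 3 / 2 * u))
  have e : (fun s => φ₁ s u) =
      fun s => Real.exp (Real.sqrt 3 / 2 * u) * (Real.sinh / Real.cosh) s := by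
    funext s
    simp [φ₁, Real.tanh_eq_sinh_div_cosh]
  unfold pt
  rw [e, h.deriv, show Real.cosh t * Real.cosh t - Real.sinh t * Real.sinh t = 1 by
    linear_combination Real.cosh_sq_sub_sinh_sq t, mul_one_div]

lemma pt_φ₂ (t u : ℝ) :
    pt φ₂ t u = -(Real.exp (Real.sqrt 3 / 2 * u) * Real.sinh t) / Real.cosh t ^ 2 := by
  have hc : Real.cosh t ≠ 0 := (Real.cosh_pos t).ne'
  have h := (hasDerivAt_const t (Real.exp (Real.sqrt 3 / 2 * u))).fun_div
    (Real.hasDerivAt_cosh t) hc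
  refine Eq.trans h.deriv ?_
  rw [zero_mul, zero_sub]

lemma pu_φ₁ (t u : ℝ) :
    pu φ₁ t u = Real.exp (Real.sqrt 3 / 2 * u) * (Real.sqrt 3 / 2) * Real.tanh t :=
  ((hasDerivAt_exp_half_sqrt_three u).mul_const (Real.tanh t)).deriv

lemma pu_φ₂ (t u : ℝ) :
    pu φ₂ t u = Real.exp (Real.sqrt 3 / 2 * u) * (Real.sqrt 3 / 2) / Real.cosh t :=
  ((hasDerivAt_exp_half_sqrt_three u).div_const (Real.cosh t)).deriv

lemma φ₂_pos (t u : ℝ) : 0 < φ₂ t u :=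
  div_pos (Real.exp_pos _) (Real.cosh_pos t)

lemma φ₁_eq (t u : ℝ) : φ₁ t u = φ₂ t u * Real.sinh t := by
  rw [φ₁, φ₂, Real.tanh_eq_sinh_div_cosh]
  ring

lemma φ₂_mul_cosh (t u : ℝ) :
    φ₂ t u * Real.cosh t = Real.exp (Real.sqrt 3 / 2 * u) :=
  div_mul_cancel₀ _ (Real.cosh_pos t).ne'

/-- **centroaffine completeness argument of Theorem 1.3.**
`φ = (φ₁,φ₂)` maps into the upper half-plane, pulls back the hyperbolic metric
`(dv₁² + dv₂²)/v₂²` to `dt² + (3/4)cosh²t du²`, and is a bijection from `ℝ²` onto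
the upper half-plane. -/
theorem stmt18 :
    (∀ t u : ℝ, 0 < φ₂ t u) ∧
    (∀ t u : ℝ,
      (pt φ₁ t u)^2 + (pt φ₂ t u)^2 = (φ₂ t u)^2 ∧
      (pu φ₁ t u)^2 + (pu φ₂ t u)^2 = (3/4) * (Real.cosh t)^2 * (φ₂ t u)^2 ∧
      pt φ₁ t u * pu φ₁ t u + pt φ₂ t u * pu φ₂ t u = 0) ∧
    Set.BijOn (fun p : ℝ × ℝ => (φ₁ p.1 p.2, φ₂ p.1 p.2)) Set.univ
      {q : ℝ × ℝ | 0 < q.2} := by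
  have h3 : Real.sqrt 3 ^ 2 = 3 := Real.sq_sqrt (by norm_num)
  have hpos : (0 : ℝ) < Real.sqrt 3 / 2 := by positivity
  refine ⟨φ₂_pos, fun t u => ?_, fun p _ => φ₂_pos p.1 p.2, ?_, ?_⟩
  · have hc : Real.cosh t ≠ 0 := (Real.cosh_pos t).ne'
    have hcs : Real.sinh t ^ 2 = Real.cosh t ^ 2 - 1 := Real.sinh_sq t
    rw [pt_φ₁, pt_φ₂, pu_φ₁, pu_φ₂, φ₂, Real.tanh_eq_sinh_div_cosh]
    generalize Real.exp (Real.sqrt 3 / 2 * u) = E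
    refine ⟨?_, ?_, ?_⟩
    · field_simp
      linear_combination E ^ 2 * hcs
    · field_simp
      linear_combination 4 * E ^ 2 * Real.sqrt 3 ^ 2 * hcs + 4 * E ^ 2 * Real.cosh t ^ 2 * h3
    · field_simp
      ring
  · rintro ⟨t, u⟩ _ ⟨t', u'⟩ _ h
    obtain ⟨h1, h2⟩ := Prod.mk.inj h
    dsimp only at h1 h2
    rw [φ₁_eq, φ₁_eq, h2] at h1
    obtain rfl : t = t' := Real.sinh_injective (mul_left_cancel₀ (φ₂_pos t' u').ne' h1)
    have he : Real.exp (Real.sqrt 3 / 2 * u) = Real.exp (Real.sqrt 3 / 2 * u') := by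
      rw [← φ₂_mul_cosh t, ← φ₂_mul_cosh t, h2]
    obtain rfl : u = u' := mul_left_cancel₀ hpos.ne' (Real.exp_injective he)
    rfl
  · rintro ⟨x, y⟩ (hy : 0 < y)
    set t := Real.arsinh (x / y) with ht
    have hC := Real.cosh_pos t
    have hφ₂ : φ₂ t (Real.log (y * Real.cosh t) / (Real.sqrt 3 / 2)) = y := by
      rw [φ₂, mul_div_cancel₀ _ hpos.ne', Real.exp_log (mul_pos hy hC),
        mul_div_cancel_right₀ _ hC.ne']
    refine ⟨(t, Real.log (y * Real.cosh t) / (Real.sqrt 3 / 2)), trivial, Prod.ext ?_ hφ₂⟩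
    dsimp only
    rw [φ₁_eq, hφ₂, ht, Real.sinh_arsinh, mul_div_cancel₀ _ hy.ne']
end
end

section
/- For every (y₁,y₂) ∈ ℝ², there exists a unique y₃ ∈ ℝ with y₃ > |y₂| such that (1/2)·(y₂+y₃)^{1/2}·(y₃-y₂)^{3/2} = 1 + y₁², where the powers are real powers of positive reals. -/
open Real

/-!
On the ray `|y₂| ≤ y₃` both `y₂ + y₃` and `y₃ - y₂` are nonnegative and strictly increasing in `y₃`,
so the left-hand side is continuous and strictly increasing there, which gives uniqueness.
It vanishes at `y₃ = |y₂|`, where one of the two factors is zero, and at `y₃ = |y₂| + c` it is at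
least `c ^ 2 / 2`, since both bases are at least `c`. The intermediate value theorem then gives
existence.
-/

/-- The defining function of the surface, `y₃ ↦ (1/2)(y₂+y₃)^{1/2}(y₃-y₂)^{3/2}`. -/
noncomputable def surfaceFun (b y : ℝ) : ℝ :=
  (1/2) * (b + y) ^ ((1:ℝ)/2) * (y - b) ^ ((3:ℝ)/2)

lemma continuous_surfaceFun (b : ℝ) : Continuous (surfaceFun b) := by
  unfold surfaceFun
  refine (continuous_const.mul ?_).mul ?_
  · exact (continuous_const.add continuous_id).rpow_const fun _ => Or.inr (by norm_num)
  · exact (continuous_id.sub continuous_const).rpow_const fun _ => Or.inr (by norm_num)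

lemma strictMonoOn_surfaceFun (b : ℝ) : StrictMonoOn (surfaceFun b) (Set.Ici |b|) := by
  intro x hx y _ hxy
  have hx' : |b| ≤ x := hx
  obtain ⟨h₁, h₂⟩ := abs_le.mp hx'
  have hs : (b + x) ^ ((1:ℝ)/2) < (b + y) ^ ((1:ℝ)/2) :=
    rpow_lt_rpow (by linarith) (by linarith) (by norm_num)
  have hd : (x - b) ^ ((3:ℝ)/2) < (y - b) ^ ((3:ℝ)/2) :=
    rpow_lt_rpow (by linarith) (by linarith) (by norm_num)
  have hprod := mul_lt_mul'' hs hd (rpow_nonneg (by linarith) _) (rpow_nonneg (by linarith) _)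
  unfold surfaceFun
  rw [mul_assoc, mul_assoc]
  linarith

lemma surfaceFun_abs (b : ℝ) : surfaceFun b |b| = 0 := by
  unfold surfaceFun
  rcases abs_choice b with h | h
  · rw [h, sub_self, zero_rpow (by norm_num), mul_zero]
  · rw [h, add_neg_cancel, zero_rpow (by norm_num), mul_zero, zero_mul]

lemma sq_div_two_le_surfaceFun (b : ℝ) {c : ℝ} (hc : 0 < c) :
    c ^ 2 / 2 ≤ surfaceFun b (|b| + c) := by
  have hs : c ^ ((1:ℝ)/2) ≤ (b + (|b| + c)) ^ ((1:ℝ)/2) :=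
    rpow_le_rpow hc.le (by linarith [neg_abs_le b]) (by norm_num)
  have hd : c ^ ((3:ℝ)/2) ≤ (|b| + c - b) ^ ((3:ℝ)/2) :=
    rpow_le_rpow hc.le (by linarith [le_abs_self b]) (by norm_num)
  have hprod := mul_le_mul hs hd (rpow_nonneg hc.le _) ((rpow_nonneg hc.le _).trans hs)
  have hsq : c ^ ((1:ℝ)/2) * c ^ ((3:ℝ)/2) = c ^ 2 := by
    rw [← rpow_add hc, ← rpow_natCast]
    norm_num
  unfold surfaceFun
  rw [mul_assoc]
  linarith

/-- **graph representation in Theorem 1.3.** For every `(y₁,y₂) ∈ ℝ²`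
there is a unique `y₃ > |y₂|` with `(1/2)(y₂+y₃)^{1/2}(y₃-y₂)^{3/2} = 1 + y₁²`. -/
theorem stmt19 (y₁ y₂ : ℝ) :
    ∃! y₃ : ℝ, |y₂| < y₃ ∧
      (1/2) * (y₂ + y₃) ^ ((1:ℝ)/2) * (y₃ - y₂) ^ ((3:ℝ)/2) = 1 + y₁^2 := by
  have hpos : 0 < 1 + y₁ ^ 2 := by positivity
  -- With `c = 2 * (1 + y₁ ^ 2) ≥ 2` one has `c ^ 2 / 2 ≥ 1 + y₁ ^ 2`.
  have hc : 0 < 2 * (1 + y₁ ^ 2) := by positivity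
  have htop : 1 + y₁ ^ 2 ≤ surfaceFun y₂ (|y₂| + 2 * (1 + y₁ ^ 2)) := by
    refine le_trans ?_ (sq_div_two_le_surfaceFun y₂ hc)
    nlinarith [sq_nonneg y₁]
  obtain ⟨y, hy, hval⟩ := intermediate_value_Icc (by linarith : |y₂| ≤ |y₂| + 2 * (1 + y₁ ^ 2))
    (continuous_surfaceFun y₂).continuousOn
    ⟨(surfaceFun_abs y₂).le.trans hpos.le, htop⟩
  have hne : |y₂| ≠ y := by
    rintro rfl
    rw [surfaceFun_abs] at hval
    exact hpos.ne hval
  refine ⟨y, ⟨lt_of_le_of_ne hy.1 hne, hval⟩, ?_⟩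
  rintro z ⟨hz, hzval⟩
  exact (strictMonoOn_surfaceFun y₂).injOn hz.le hy.1 (Eq.trans hzval hval.symm)
end
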